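/- In the hypercube-center graph G_S, for every left-half center X_{x_1,x_2,x_3} and every right-half center Y_{y_4,y_5,y_6}, we have dist_{G_S}(X_{x_1,x_2,x_3}, Y_{y_4,y_5,y_6}) > 2 if and only if (x_1,x_2,x_3,y_4,y_5,y_6) is an independent set in G, i.e., no 3-element subset of {x_1,x_2,x_3,y_4,y_5,y_6} is a hyperedge of E. -/

import Mathlib

open scoped Classical

/-- A vertex of the 6-partite 3-uniform hypergraph: a part `ℓ ∈ Fin 6` together with a
value in `[n]` (represented by `Fin n`). -/
abbrev HypVert (n : ℕ) := Fin 6 × Fin n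

/-- The value `v/(n+1)` associated to a vertex value `v ∈ [n]` (here `v : Fin n` represents
the value `v+1 ∈ [n]`). -/
noncomputable def hval (n : ℕ) (v : Fin n) : ℝ := ((v : ℕ) + 1) / ((n : ℝ) + 1)

/-- The set of parts met by a set of hypergraph vertices. -/
def hparts {n : ℕ} (e : Finset (HypVert n)) : Finset (Fin 6) := e.image Prod.fst

/-- The hyperedge set is well-formed: every hyperedge consists of `3` vertices lying in
three pairwise distinct parts. -/
def WellFormed {n : ℕ} (E : Set (Finset (HypVert n))) : Prop :=
  ∀ e ∈ E, e.card = 3 ∧ (hparts e).card = 3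

/-- The vertex triple `{(1, x₁), (2, x₂), (3, x₃)}` (parts `1,2,3`, `0`-based `0,1,2`). -/
def tripleL {n : ℕ} (x : Fin 3 → Fin n) : Finset (HypVert n) :=
  Finset.univ.image fun ℓ : Fin 3 => ((⟨(ℓ : ℕ), by have := ℓ.isLt; omega⟩ : Fin 6), x ℓ)

/-- The vertex triple `{(4, y₄), (5, y₅), (6, y₆)}` (parts `4,5,6`, `0`-based `3,4,5`). -/
def tripleR {n : ℕ} (y : Fin 3 → Fin n) : Finset (HypVert n) :=
  Finset.univ.image fun ℓ : Fin 3 => ((⟨(ℓ : ℕ) + 3, by have := ℓ.isLt; omega⟩ : Fin 6), y ℓ)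

/-- The left-half center `X x`: in the coordinate pair of part `ℓ ∈ {1,2,3}` it equals
`(x_ℓ/(n+1), 1 − x_ℓ/(n+1))`, and it equals `(2,2)` in the coordinate pairs of parts
`4,5,6`.  (The `12` coordinates are indexed by `Fin 6 × Fin 2`: a part and a position
within its coordinate pair.) -/
noncomputable def Xpt (n : ℕ) (x : Fin 3 → Fin n) : Fin 6 × Fin 2 → ℝ := fun p =>
  if h : (p.1 : ℕ) < 3 then
    (if p.2 = 0 then hval n (x ⟨(p.1 : ℕ), h⟩) else 1 - hval n (x ⟨(p.1 : ℕ), h⟩))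
  else 2

/-- The right-half center `Y y`: `(2,2)` in the coordinate pairs of parts `1,2,3` and
`(y_ℓ/(n+1), 1 − y_ℓ/(n+1))` in the coordinate pair of part `ℓ ∈ {4,5,6}`. -/
noncomputable def Ypt (n : ℕ) (y : Fin 3 → Fin n) : Fin 6 × Fin 2 → ℝ := fun p =>
  if h : 3 ≤ (p.1 : ℕ) then
    (if p.2 = 0 then hval n (y ⟨(p.1 : ℕ) - 3, by have := p.1.isLt; omega⟩)
     else 1 - hval n (y ⟨(p.1 : ℕ) - 3, by have := p.1.isLt; omega⟩))
  else 2

/-- The edge center of a hyperedge `e`: in the coordinate pair of a part `ℓ` met by `e`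
(with vertex value `v`) it equals `(1 + v/(n+1), 2 − v/(n+1))`, and it equals `(1,1)` in the
coordinate pairs of all other parts. -/
noncomputable def Ept (n : ℕ) (e : Finset (HypVert n)) : Fin 6 × Fin 2 → ℝ := fun p =>
  if (∃ v : Fin n, (p.1, v) ∈ e) then
    (if p.2 = 0 then 1 + ∑ v : Fin n, (if (p.1, v) ∈ e then hval n v else 0)
     else 2 - ∑ v : Fin n, (if (p.1, v) ∈ e then hval n v else 0))
  else 1

/-- Vertices of the hypercube-center graph `G_S`: left-half centers for non-hyperedge
triples from `V₁ × V₂ × V₃`, right-half centers for non-hyperedge triples from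
`V₄ × V₅ × V₆`, and edge centers for hyperedges whose parts lie neither all in `{1,2,3}`
nor all in `{4,5,6}`. -/
inductive GSVert (n : ℕ) (E : Set (Finset (HypVert n))) : Type where
  | left (x : Fin 3 → Fin n) (h : tripleL x ∉ E)
  | right (y : Fin 3 → Fin n) (h : tripleR y ∉ E)
  | edge (e : Finset (HypVert n)) (he : e ∈ E)
      (h1 : ¬ hparts e ⊆ ({0, 1, 2} : Finset (Fin 6)))
      (h2 : ¬ hparts e ⊆ ({3, 4, 5} : Finset (Fin 6)))

/-- The center in `ℝ^12` associated to each vertex of `G_S`. -/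
noncomputable def gsPos {n : ℕ} {E : Set (Finset (HypVert n))} :
    GSVert n E → (Fin 6 × Fin 2 → ℝ)
  | .left x _ => Xpt n x
  | .right y _ => Ypt n y
  | .edge e _ _ _ => Ept n e

/-- The hypercube-center graph `G_S`: two distinct centers are adjacent iff their
`ℓ∞`-distance is at most `1` (the distance on `Fin 6 × Fin 2 → ℝ` is the sup-metric), i.e.
iff the closed axis-parallel unit hypercubes around them intersect. -/
noncomputable def gsGraph (n : ℕ) (E : Set (Finset (HypVert n))) :
    SimpleGraph (GSVert n E) :=
  SimpleGraph.fromRel fun u v => dist (gsPos u) (gsPos v) ≤ 1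

/-!
In a part met by both a half center and an edge center, with vertex values `a` and `b` scaled to
`[0, 1]`, the coordinate pairs `(a, 1 - a)` and `(1 + b, 2 - b)` are within distance `1` iff
`b ≤ a` and `a ≤ b`, that is, iff the two vertices coincide; all other parts never obstruct
adjacency. So a common neighbor of `X x` and `Y y` is an edge center whose hyperedge agrees with
the transversal `{x₁, x₂, x₃, y₄, y₅, y₆}` in every part it meets, i.e. is contained in it.
Conversely, a hyperedge contained in this transversal cannot lie on one side only, since it would
then be the triple of `x` or of `y`, so it does have an edge center. Two half centers of opposite
sides are never adjacent, so they are at distance at most `2` iff they have a common neighbor.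
-/

section

variable {n : ℕ} {E : Set (Finset (HypVert n))} {e s t : Finset (HypVert n)}
  {p q : Fin 6 × Fin 2 → ℝ} {x y : Fin 3 → Fin n} {i : Fin 6} {v : Fin n}

lemma mem_hparts : i ∈ hparts s ↔ ∃ v, (i, v) ∈ s := by
  simp [hparts]

/-- `s` and `t` select the same vertex in each part met by both. In particular
`AgreeOnParts s s` says that `s` is a partial transversal: it has at most one vertex per part. -/
def AgreeOnParts (s t : Finset (HypVert n)) : Prop :=
  ∀ ⦃i v w⦄, (i, v) ∈ s → (i, w) ∈ t → v = w

lemma AgreeOnParts.mono_left (h : AgreeOnParts t e) (hst : s ⊆ t) : AgreeOnParts s e :=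
  fun _ _ _ hv hw => h (hst hv) hw

lemma agreeOnParts_union_left :
    AgreeOnParts (s ∪ t) e ↔ AgreeOnParts s e ∧ AgreeOnParts t e := by
  refine ⟨fun h => ⟨h.mono_left Finset.subset_union_left,
    h.mono_left Finset.subset_union_right⟩, ?_⟩
  rintro ⟨hs, ht⟩ i v w hv hw
  exact (Finset.mem_union.mp hv).elim (hs · hw) (ht · hw)

lemma AgreeOnParts.subset (h : AgreeOnParts s e) (hsub : hparts e ⊆ hparts s) : e ⊆ s := by
  rintro ⟨i, w⟩ hw
  obtain ⟨v, hv⟩ := mem_hparts.mp (hsub (mem_hparts.mpr ⟨w, hw⟩))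
  rwa [← h hv hw]

lemma WellFormed.agreeOnParts_self (hE : WellFormed E) (he : e ∈ E) : AgreeOnParts e e := by
  have hinj : Set.InjOn Prod.fst (e : Set (HypVert n)) :=
    Finset.card_image_iff.mp ((hE e he).2.trans (hE e he).1.symm)
  exact fun i v w hv hw => congrArg Prod.snd (hinj hv hw rfl)

lemma WellFormed.not_hparts_subset (hE : WellFormed E) (he : e ∈ E) (hs : s ∉ E)
    (hcard : s.card ≤ 3) (h : AgreeOnParts s e) : ¬ hparts e ⊆ hparts s := fun hsub =>
  hs (Finset.eq_of_subset_of_card_le (h.subset hsub) (hcard.trans_eq (hE e he).1.symm) ▸ he)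

lemma card_tripleL_le (x : Fin 3 → Fin n) : (tripleL x).card ≤ 3 :=
  Finset.card_image_le

lemma card_tripleR_le (y : Fin 3 → Fin n) : (tripleR y).card ≤ 3 :=
  Finset.card_image_le

lemma hparts_tripleL (x : Fin 3 → Fin n) : hparts (tripleL x) = {0, 1, 2} := by
  rw [hparts, tripleL, Finset.image_image]
  rfl

lemma hparts_tripleR (y : Fin 3 → Fin n) : hparts (tripleR y) = {3, 4, 5} := by
  rw [hparts, tripleR, Finset.image_image]
  rfl

lemma mem_tripleL : (i, v) ∈ tripleL x ↔ ∃ h : (i : ℕ) < 3, x ⟨i, h⟩ = v := by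
  simp only [tripleL, Finset.mem_image, Finset.mem_univ, true_and, Prod.mk.injEq]
  constructor
  · rintro ⟨l, rfl, rfl⟩
    exact ⟨l.isLt, rfl⟩
  · rintro ⟨h, rfl⟩
    exact ⟨⟨i, h⟩, rfl, rfl⟩

lemma mem_tripleR : (i, v) ∈ tripleR y ↔ ∃ h : 3 ≤ (i : ℕ), y ⟨i - 3, by omega⟩ = v := by
  simp only [tripleR, Finset.mem_image, Finset.mem_univ, true_and, Prod.mk.injEq]
  constructor
  · rintro ⟨l, rfl, rfl⟩
    exact ⟨Nat.le_add_left 3 l, rfl⟩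
  · rintro ⟨h, rfl⟩
    exact ⟨⟨i - 3, by omega⟩, Fin.ext (Nat.sub_add_cancel h), rfl⟩

lemma mem_tripleL_union_tripleR :
    (i, v) ∈ tripleL x ∪ tripleR y ↔ Fin.append x y i = v := by
  rw [Finset.mem_union, mem_tripleL, mem_tripleR]
  obtain hi | hi := lt_or_ge (i : ℕ) 3
  · have happ : Fin.append x y i = x ⟨i, hi⟩ := Fin.append_left x y ⟨i, hi⟩
    simp [happ, hi]
  · have happ : Fin.append x y i = y ⟨i - 3, by omega⟩ := by
      rw [← Fin.append_right x y ⟨i - 3, by omega⟩]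
      exact congrArg _ (Fin.ext (Nat.add_sub_cancel' hi).symm)
    simp [happ, hi]

lemma agreeOnParts_tripleL_union_tripleR_iff :
    AgreeOnParts (tripleL x ∪ tripleR y) e ↔ e ⊆ tripleL x ∪ tripleR y := by
  constructor
  · exact fun h => h.subset fun i _ => mem_hparts.mpr ⟨_, mem_tripleL_union_tripleR.mpr rfl⟩
  · intro he i v w hv hw
    exact (mem_tripleL_union_tripleR.mp hv).symm.trans (mem_tripleL_union_tripleR.mp (he hw))

lemma hval_mem_Ioo (v : Fin n) : hval n v ∈ Set.Ioo (0 : ℝ) 1 := by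
  have hv : ((v : ℕ) : ℝ) < n := by exact_mod_cast v.isLt
  refine ⟨by unfold hval; positivity, ?_⟩
  rw [hval, div_lt_one (by positivity)]
  linarith

lemma hval_injective (n : ℕ) : Function.Injective (hval n) := fun a b h => by
  have hn : (n : ℝ) + 1 ≠ 0 := by positivity
  rw [hval, hval, div_left_inj' hn] at h
  exact Fin.ext (by exact_mod_cast add_right_cancel h)

lemma abs_sub_one_add_le_one_and_abs_one_sub_sub_le_one_iff {a b : ℝ} :
    |a - (1 + b)| ≤ 1 ∧ |1 - a - (2 - b)| ≤ 1 ↔ a = b := by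
  constructor
  · rintro ⟨h₀, h₁⟩
    exact le_antisymm (by linarith [(abs_le.mp h₁).1]) (by linarith [(abs_le.mp h₀).1])
  · rintro rfl
    norm_num [abs_le]

/-- The point `p` is the half center of the vertex set `s`: the coordinate pair of a part met by
`s` is `(v/(n+1), 1 - v/(n+1))`, and all other coordinates are `2`. This is the common form of the
left-half and right-half centers. -/
structure IsHalfCenter (s : Finset (HypVert n)) (p : Fin 6 × Fin 2 → ℝ) : Prop where
  eq_of_mem : ∀ ⦃i v⦄, (i, v) ∈ s → ∀ j, p (i, j) = if j = 0 then hval n v else 1 - hval n v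
  eq_two : ∀ ⦃i⦄, i ∉ hparts s → ∀ j, p (i, j) = 2

lemma isHalfCenter_Xpt (x : Fin 3 → Fin n) : IsHalfCenter (tripleL x) (Xpt n x) where
  eq_of_mem i v hv j := by
    obtain ⟨hi, rfl⟩ := mem_tripleL.mp hv
    simp only [Xpt, dif_pos hi]
  eq_two i hi j := by
    have hi' : ¬ (i : ℕ) < 3 := by simpa [mem_hparts, mem_tripleL] using hi
    simp [Xpt, hi']

lemma isHalfCenter_Ypt (y : Fin 3 → Fin n) : IsHalfCenter (tripleR y) (Ypt n y) where
  eq_of_mem i v hv j := by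
    obtain ⟨hi, rfl⟩ := mem_tripleR.mp hv
    simp only [Ypt, dif_pos hi]
  eq_two i hi j := by
    have hi' : ¬ 3 ≤ (i : ℕ) := by simpa [mem_hparts, mem_tripleR] using hi
    simp [Ypt, hi']

lemma Ept_of_mem (he : AgreeOnParts e e) (hv : (i, v) ∈ e) (j : Fin 2) :
    Ept n e (i, j) = if j = 0 then 1 + hval n v else 2 - hval n v := by
  have hmem : ∀ w, (i, w) ∈ e ↔ w = v := fun w => ⟨fun hw => he hw hv, fun h => h ▸ hv⟩
  simp [Ept, hmem]

lemma Ept_of_notMem_hparts (hi : i ∉ hparts e) (j : Fin 2) : Ept n e (i, j) = 1 := by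
  simp only [Ept, if_neg (mt mem_hparts.mpr hi)]

lemma Ept_mem_Icc (he : AgreeOnParts e e) (r : Fin 6 × Fin 2) :
    Ept n e r ∈ Set.Icc (1 : ℝ) 2 := by
  obtain ⟨i, j⟩ := r
  by_cases hi : i ∈ hparts e
  · obtain ⟨v, hv⟩ := mem_hparts.mp hi
    obtain ⟨hpos, hlt⟩ := hval_mem_Ioo v
    rw [Ept_of_mem he hv]
    split_ifs <;> constructor <;> linarith
  · simp [Ept_of_notMem_hparts hi]

lemma IsHalfCenter.mem_Icc_of_mem_hparts (hp : IsHalfCenter s p) (hi : i ∈ hparts s)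
    (j : Fin 2) : p (i, j) ∈ Set.Icc (0 : ℝ) 1 := by
  obtain ⟨v, hv⟩ := mem_hparts.mp hi
  obtain ⟨hpos, hlt⟩ := hval_mem_Ioo v
  rw [hp.eq_of_mem hv]
  split_ifs <;> constructor <;> linarith

lemma IsHalfCenter.abs_sub_Ept_le_one_of_notMem_hparts_right (hp : IsHalfCenter s p)
    (hs : i ∈ hparts s) (hi : i ∉ hparts e) (j : Fin 2) :
    |p (i, j) - Ept n e (i, j)| ≤ 1 := by
  obtain ⟨hpos, hle⟩ := hp.mem_Icc_of_mem_hparts hs j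
  rw [Ept_of_notMem_hparts hi, abs_le]
  constructor <;> linarith

lemma IsHalfCenter.abs_sub_Ept_le_one_of_notMem_hparts_left (hp : IsHalfCenter s p)
    (he : AgreeOnParts e e) (hi : i ∉ hparts s) (j : Fin 2) :
    |p (i, j) - Ept n e (i, j)| ≤ 1 := by
  obtain ⟨hone, htwo⟩ := Ept_mem_Icc he (i, j)
  rw [hp.eq_two hi, abs_le]
  constructor <;> linarith

lemma IsHalfCenter.abs_sub_Ept_le_one_iff (hp : IsHalfCenter s p) (he : AgreeOnParts e e)
    {w : Fin n} (hv : (i, v) ∈ s) (hw : (i, w) ∈ e) :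
    (∀ j, |p (i, j) - Ept n e (i, j)| ≤ 1) ↔ v = w := by
  simp only [hp.eq_of_mem hv, Ept_of_mem he hw, Fin.forall_fin_two, if_true, one_ne_zero,
    if_false, abs_sub_one_add_le_one_and_abs_one_sub_sub_le_one_iff, (hval_injective n).eq_iff]

lemma IsHalfCenter.dist_Ept_le_one_iff (hp : IsHalfCenter s p) (he : AgreeOnParts e e) :
    dist p (Ept n e) ≤ 1 ↔ AgreeOnParts s e := by
  simp only [dist_pi_le_iff zero_le_one, Real.dist_eq, Prod.forall]
  constructor
  · exact fun h i v w hv hw => (hp.abs_sub_Ept_le_one_iff he hv hw).mp (h i)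
  · intro h i
    by_cases hs : i ∈ hparts s
    · by_cases hi : i ∈ hparts e
      · obtain ⟨v, hv⟩ := mem_hparts.mp hs
        obtain ⟨w, hw⟩ := mem_hparts.mp hi
        exact (hp.abs_sub_Ept_le_one_iff he hv hw).mpr (h hv hw)
      · exact hp.abs_sub_Ept_le_one_of_notMem_hparts_right hs hi
    · exact hp.abs_sub_Ept_le_one_of_notMem_hparts_left he hs

lemma IsHalfCenter.one_lt_dist (hp : IsHalfCenter s p) (hq : IsHalfCenter t q)
    (hs : i ∈ hparts s) (ht : i ∉ hparts t) : 1 < dist p q := by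
  obtain ⟨v, hv⟩ := mem_hparts.mp hs
  calc 1 < 2 - hval n v := by linarith [(hval_mem_Ioo v).2]
    _ = q (i, 0) - p (i, 0) := by rw [hq.eq_two ht, hp.eq_of_mem hv, if_pos rfl]
    _ ≤ dist (q (i, 0)) (p (i, 0)) := le_abs_self _
    _ ≤ dist p q := by rw [dist_comm]; exact dist_le_pi_dist p q (i, 0)

lemma gsGraph_adj_iff {u w : GSVert n E} :
    (gsGraph n E).Adj u w ↔ u ≠ w ∧ dist (gsPos u) (gsPos w) ≤ 1 := by
  simp only [gsGraph, SimpleGraph.fromRel_adj, dist_comm (gsPos w), or_self]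

section Adjacency

variable {hx : tripleL x ∉ E} {hy : tripleR y ∉ E}

lemma not_gsGraph_adj_left_right : ¬ (gsGraph n E).Adj (.left x hx) (.right y hy) := fun h =>
  ((isHalfCenter_Xpt x).one_lt_dist (isHalfCenter_Ypt y) (i := 0) (by simp [hparts_tripleL])
    (by simp [hparts_tripleR])).not_ge (gsGraph_adj_iff.mp h).2

variable {he : e ∈ E} {h₁ : ¬ hparts e ⊆ {0, 1, 2}} {h₂ : ¬ hparts e ⊆ {3, 4, 5}}

lemma gsGraph_adj_left_edge (hE : WellFormed E) :
    (gsGraph n E).Adj (.left x hx) (.edge e he h₁ h₂) ↔ AgreeOnParts (tripleL x) e := by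
  rw [gsGraph_adj_iff, ← (isHalfCenter_Xpt x).dist_Ept_le_one_iff (hE.agreeOnParts_self he)]
  exact and_iff_right nofun

lemma gsGraph_adj_right_edge (hE : WellFormed E) :
    (gsGraph n E).Adj (.right y hy) (.edge e he h₁ h₂) ↔ AgreeOnParts (tripleR y) e := by
  rw [gsGraph_adj_iff, ← (isHalfCenter_Ypt y).dist_Ept_le_one_iff (hE.agreeOnParts_self he)]
  exact and_iff_right nofun

lemma edge_mem_commonNeighbors_iff (hE : WellFormed E) :
    .edge e he h₁ h₂ ∈ (gsGraph n E).commonNeighbors (.left x hx) (.right y hy) ↔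
      e ⊆ tripleL x ∪ tripleR y := by
  rw [SimpleGraph.mem_commonNeighbors, gsGraph_adj_left_edge hE, gsGraph_adj_right_edge hE,
    ← agreeOnParts_union_left, agreeOnParts_tripleL_union_tripleR_iff]

lemma commonNeighbors_left_right_nonempty_iff (hE : WellFormed E) :
    ((gsGraph n E).commonNeighbors (.left x hx) (.right y hy)).Nonempty ↔
      ∃ e ∈ E, e ⊆ tripleL x ∪ tripleR y := by
  constructor
  · rintro ⟨_ | _ | ⟨e, he, h₁, h₂⟩, hw⟩
    · exact absurd hw.2.symm not_gsGraph_adj_left_right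
    · exact absurd hw.1 not_gsGraph_adj_left_right
    · exact ⟨e, he, (edge_mem_commonNeighbors_iff hE).mp hw⟩
  · rintro ⟨e, he, hsub⟩
    obtain ⟨hL, hR⟩ :=
      agreeOnParts_union_left.mp (agreeOnParts_tripleL_union_tripleR_iff.mpr hsub)
    have h₁ : ¬ hparts e ⊆ {0, 1, 2} :=
      hparts_tripleL x ▸ hE.not_hparts_subset he hx (card_tripleL_le x) hL
    have h₂ : ¬ hparts e ⊆ {3, 4, 5} :=
      hparts_tripleR y ▸ hE.not_hparts_subset he hy (card_tripleR_le y) hR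
    exact ⟨.edge e he h₁ h₂, (edge_mem_commonNeighbors_iff hE).mpr hsub⟩

end Adjacency

end

/-- In `G_S`, a left-half center and a right-half center are at distance
greater than `2` iff the corresponding `6`-tuple is an independent set in the hypergraph,
i.e. no hyperedge is contained in the union of the two vertex triples. -/
theorem gsGraph_left_right_distance (n : ℕ) (hn : 1 ≤ n) (E : Set (Finset (HypVert n)))
    (hE : WellFormed E)
    (x : Fin 3 → Fin n) (hx : tripleL x ∉ E)
    (y : Fin 3 → Fin n) (hy : tripleR y ∉ E) :
    2 < (gsGraph n E).edist (GSVert.left x hx) (GSVert.right y hy) ↔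
      ¬ ∃ e ∈ E, e ⊆ tripleL x ∪ tripleR y := by
  rw [SimpleGraph.two_lt_edist_iff,
    ← commonNeighbors_left_right_nonempty_iff (hx := hx) (hy := hy) hE,
    Set.not_nonempty_iff_eq_empty]
  exact ⟨fun h => h.2.2, fun h => ⟨nofun, not_gsGraph_adj_left_right, h⟩⟩
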